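/- arXiv:1806.03587 — 2 statements merged into one kernel-verified Lean document; each statement's English description precedes it below -/
import Mathlib

section
/- Weak comparison with a classical solution (supersolution version): Let Ω be a bounded domain in ℝ^N with N ≥ 2 and let H : Ω → ℝ be locally Lipschitz continuous. Let u : cl(Ω) → ℝ be lower semicontinuous on cl(Ω) and a viscosity supersolution of M(u) = NH in Ω, and let v ∈ C²(Ω) ∩ C(cl(Ω)) satisfy M(v) = NH pointwise in Ω. If u ≥ v on ∂Ω, then u ≥ v in Ω. -/
open Metric Set Filter Topology MeasureTheory

/-- The mean curvature operator `M(w) = div (Dw / sqrt (1 + |Dw|²))`,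
computed as the sum of the partial derivatives of the components of the
normalized gradient field. -/
noncomputable def mcOp {N : ℕ} (w : EuclideanSpace ℝ (Fin N) → ℝ)
    (x : EuclideanSpace ℝ (Fin N)) : ℝ :=
  ∑ i : Fin N,
    fderiv ℝ (fun y => (Real.sqrt (1 + ‖gradient w y‖ ^ 2))⁻¹ * gradient w y i) x
      (EuclideanSpace.single i 1)

/-- `f` is locally Lipschitz continuous on the set `s`. -/
def LocLipschitzOn {N : ℕ} (s : Set (EuclideanSpace ℝ (Fin N)))
    (f : EuclideanSpace ℝ (Fin N) → ℝ) : Prop :=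
  ∀ x ∈ s, ∃ K : NNReal, ∃ t ∈ 𝓝[s] x, LipschitzOnWith K f t

/-- `u` is a viscosity supersolution of `M(u) = N H` on the open set `U`. -/
def IsViscositySupersol {N : ℕ} (U : Set (EuclideanSpace ℝ (Fin N)))
    (H u : EuclideanSpace ℝ (Fin N) → ℝ) : Prop :=
  ∀ φ : EuclideanSpace ℝ (Fin N) → ℝ, ContDiffOn ℝ 2 φ U →
    ∀ x ∈ U, IsLocalMinOn (fun y => u y - φ y) U x → mcOp φ x ≤ N * H x

/-- `v` is a viscosity subsolution of `M(v) = N H` on the open set `U`. -/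
def IsViscositySubsol {N : ℕ} (U : Set (EuclideanSpace ℝ (Fin N)))
    (H v : EuclideanSpace ℝ (Fin N) → ℝ) : Prop :=
  ∀ φ : EuclideanSpace ℝ (Fin N) → ℝ, ContDiffOn ℝ 2 φ U →
    ∀ x ∈ U, IsLocalMaxOn (fun y => v y - φ y) U x → mcOp φ x ≥ N * H x

/-!
Write `M(w) = tr (A(Dw) D²w)`, where `A(p)` is the derivative of `p ↦ p / √(1 + |p|²)`. On a compact
set of gradients `A` is Lipschitz and uniformly elliptic, so adding `ε exp(λ⟨e, x⟩)` to `v` changes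
the gradient by some `s e` and the Hessian by `λ s e ⊗ e`: the ellipticity gain is of order `λ s`,
while the loss from moving the coefficients is only `O(s)`. For `λ` large and all small `ε` the
perturbed function is therefore a strict subsolution on a given compact set. If `u - v` were
negative somewhere, the perturbed difference would attain its minimum in a compact sublevel set
inside `Ω`, where the perturbed function is a test function violating the supersolution property.
-/

section MeanCurvatureForm

open InnerProductSpace

variable {E : Type*} [NormedAddCommGroup E] [InnerProductSpace ℝ E]

/-- The flux `p / √(1 + |p|²)` whose divergence along a gradient field is the mean curvature
operator. -/
noncomputable def mcFlux (p : E) : E :=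
  (√(1 + ‖p‖ ^ 2))⁻¹ • p

theorem contDiff_mcFlux {n : WithTop ℕ∞} : ContDiff ℝ n (mcFlux : E → E) := by
  have one_add_sq_ne_zero (p : E) : 1 + ‖p‖ ^ 2 ≠ 0 := by positivity
  have contDiff_sqrt : ContDiff ℝ n fun p : E => √(1 + ‖p‖ ^ 2) :=
    (contDiff_const.add (contDiff_id.norm_sq ℝ)).sqrt one_add_sq_ne_zero
  exact (contDiff_sqrt.inv fun p => by positivity).smul contDiff_id

theorem hasFDerivAt_inv_sqrt_one_add_norm_sq (p : E) :
    HasFDerivAt (fun q : E => (√(1 + ‖q‖ ^ 2))⁻¹)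
      (-(√(1 + ‖p‖ ^ 2))⁻¹ ^ 3 • innerSL ℝ p) p := by
  have sq_pos : 0 < 1 + ‖p‖ ^ 2 := by positivity
  have hasFDerivAt_sqrt :=
    ((hasStrictFDerivAt_norm_sq p).hasFDerivAt.const_add 1).sqrt sq_pos.ne'
  refine ((hasDerivAt_inv (Real.sqrt_pos.2 sq_pos).ne').comp_hasFDerivAt p hasFDerivAt_sqrt)
    |>.congr_fderiv ?_
  module

theorem fderiv_mcFlux_apply (p h : E) :
    fderiv ℝ mcFlux p h =
      (√(1 + ‖p‖ ^ 2))⁻¹ • h - ((√(1 + ‖p‖ ^ 2))⁻¹ ^ 3 * inner ℝ p h) • p := by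
  have hasFDerivAt_flux : HasFDerivAt mcFlux _ p :=
    (hasFDerivAt_inv_sqrt_one_add_norm_sq p).smul (hasFDerivAt_id p)
  simp [hasFDerivAt_flux.fderiv, sub_eq_add_neg]

theorem le_inner_fderiv_mcFlux_self (p h : E) :
    (√(1 + ‖p‖ ^ 2))⁻¹ ^ 3 * ‖h‖ ^ 2 ≤ inner ℝ h (fderiv ℝ mcFlux p h) := by
  set r := √(1 + ‖p‖ ^ 2) with hr
  have r_pos : 0 < r := by positivity
  have r_sq : r ^ 2 = 1 + ‖p‖ ^ 2 := Real.sq_sqrt (by positivity)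
  have cauchy_schwarz : inner ℝ p h ^ 2 ≤ ‖p‖ ^ 2 * ‖h‖ ^ 2 := by
    rw [← mul_pow, sq_le_sq, abs_of_nonneg (by positivity : 0 ≤ ‖p‖ * ‖h‖)]
    exact abs_real_inner_le_norm p h
  calc r⁻¹ ^ 3 * ‖h‖ ^ 2
      ≤ r⁻¹ ^ 3 * (r ^ 2 * ‖h‖ ^ 2 - inner ℝ p h ^ 2) := by
        gcongr
        rw [r_sq]
        linarith
    _ = r⁻¹ * ‖h‖ ^ 2 - r⁻¹ ^ 3 * inner ℝ p h ^ 2 := by field_simp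
    _ = inner ℝ h (fderiv ℝ mcFlux p h) := by
        rw [fderiv_mcFlux_apply, ← hr, inner_sub_right, inner_smul_right, inner_smul_right,
          real_inner_self_eq_norm_sq, real_inner_comm p h]
        ring

theorem le_inner_fderiv_mcFlux_self_of_norm_le {p : E} {R : ℝ} (hp : ‖p‖ ≤ R) (h : E) :
    (√(1 + R ^ 2))⁻¹ ^ 3 * ‖h‖ ^ 2 ≤ inner ℝ h (fderiv ℝ mcFlux p h) :=
  calc (√(1 + R ^ 2))⁻¹ ^ 3 * ‖h‖ ^ 2
      ≤ (√(1 + ‖p‖ ^ 2))⁻¹ ^ 3 * ‖h‖ ^ 2 := by gcongr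
    _ ≤ inner ℝ h (fderiv ℝ mcFlux p h) := le_inner_fderiv_mcFlux_self p h

variable [FiniteDimensional ℝ E]

theorem abs_trace_le_finrank_mul_norm (T : E →L[ℝ] E) :
    |LinearMap.trace ℝ E T| ≤ Module.finrank ℝ E * ‖T‖ := by
  let b := stdOrthonormalBasis ℝ E
  have abs_diag_le (i) : |inner ℝ (b i) (T (b i))| ≤ ‖T‖ := by
    simpa [b.norm_eq_one] using
      (abs_real_inner_le_norm (b i) (T (b i))).trans
        (mul_le_mul_of_nonneg_left (T.le_opNorm (b i)) (norm_nonneg _))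
  calc |LinearMap.trace ℝ E T|
      = |∑ i, inner ℝ (b i) (T (b i))| := by rw [LinearMap.trace_eq_sum_inner _ b]; rfl
    _ ≤ ∑ i, |inner ℝ (b i) (T (b i))| := Finset.abs_sum_le_sum_abs _ _
    _ ≤ ∑ _i, ‖T‖ := Finset.sum_le_sum fun i _ => abs_diag_le i
    _ = Module.finrank ℝ E * ‖T‖ := by simp

/-- The mean curvature operator in nondivergence form, `tr (A(p) X)` with `A(p)` the derivative of
`mcFlux` at `p`; `p` stands for the gradient and `X` for the Hessian. -/
noncomputable def mcForm (p : E) (X : E →L[ℝ] E) : ℝ :=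
  LinearMap.trace ℝ E (fderiv ℝ mcFlux p ∘L X)

theorem mcForm_add_smul_rankOne (p e : E) (X : E →L[ℝ] E) (t : ℝ) :
    mcForm p (X + t • rankOne ℝ e e) = mcForm p X + t * inner ℝ e (fderiv ℝ mcFlux p e) := by
  simp [mcForm, ContinuousLinearMap.comp_add, comp_rankOne, trace_rankOne]

theorem abs_mcForm_sub_mcForm_le (p q : E) (X : E →L[ℝ] E) :
    |mcForm q X - mcForm p X| ≤
      Module.finrank ℝ E * (‖fderiv ℝ mcFlux q - fderiv ℝ mcFlux p‖ * ‖X‖) := by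
  have sub_eq : mcForm q X - mcForm p X =
      LinearMap.trace ℝ E ((fderiv ℝ mcFlux q - fderiv ℝ mcFlux p) ∘L X) := by
    simp [mcForm, ContinuousLinearMap.sub_comp]
  rw [sub_eq]
  refine (abs_trace_le_finrank_mul_norm _).trans ?_
  gcongr
  exact ContinuousLinearMap.opNorm_comp_le _ _

theorem exists_abs_mcForm_sub_mcForm_le (R C : ℝ) :
    ∃ L : ℝ, 0 ≤ L ∧ ∀ p q : E, ‖p‖ ≤ R → ‖q‖ ≤ R → ∀ X : E →L[ℝ] E, ‖X‖ ≤ C →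
      |mcForm q X - mcForm p X| ≤ L * ‖q - p‖ := by
  have contDiff_fderiv : ContDiff ℝ 1 (fderiv ℝ (mcFlux : E → E)) :=
    contDiff_mcFlux.fderiv_right (n := 2) (by norm_num)
  obtain ⟨L, lipschitz⟩ := contDiff_fderiv.locallyLipschitz.locallyLipschitzOn
    |>.exists_lipschitzOnWith_of_compact (isCompact_closedBall (0 : E) R)
  refine ⟨Module.finrank ℝ E * (L * |C|), by positivity, fun p q hp hq X hX => ?_⟩
  have fderiv_sub_le : ‖fderiv ℝ mcFlux q - fderiv ℝ mcFlux p‖ ≤ L * ‖q - p‖ :=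
    lipschitz.norm_sub_le (by simpa using hq) (by simpa using hp)
  calc |mcForm q X - mcForm p X|
      ≤ Module.finrank ℝ E * (‖fderiv ℝ mcFlux q - fderiv ℝ mcFlux p‖ * ‖X‖) :=
        abs_mcForm_sub_mcForm_le p q X
    _ ≤ Module.finrank ℝ E * (L * ‖q - p‖ * |C|) := by
        gcongr
        exact hX.trans (le_abs_self C)
    _ = Module.finrank ℝ E * (L * |C|) * ‖q - p‖ := by ring

theorem exists_mcForm_lt_mcForm_add (R C : ℝ) :
    ∃ lam : ℝ, 0 < lam ∧ ∀ e : E, ‖e‖ = 1 → ∀ p : E, ‖p‖ ≤ R → ∀ X : E →L[ℝ] E, ‖X‖ ≤ C →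
      ∀ s ∈ Ioc (0 : ℝ) 1,
        mcForm p X < mcForm (p + s • e) (X + (lam * s) • rankOne ℝ e e) := by
  obtain ⟨L, L_nonneg, mcForm_sub_le⟩ := exists_abs_mcForm_sub_mcForm_le (E := E) (R + 1) C
  set a : ℝ := (√(1 + (R + 1) ^ 2))⁻¹ ^ 3
  have a_pos : 0 < a := by positivity
  refine ⟨(L + 1) / a, by positivity, fun e he p hp X hX s ⟨s_pos, s_le⟩ => ?_⟩
  have norm_smul_e : ‖s • e‖ = s := by rw [norm_smul, he, mul_one, Real.norm_of_nonneg s_pos.le]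
  have norm_q : ‖p + s • e‖ ≤ R + 1 := (norm_add_le _ _).trans (by rw [norm_smul_e]; gcongr)
  have loss : -(L * s) ≤ mcForm (p + s • e) X - mcForm p X := by
    have := mcForm_sub_le p (p + s • e) (by linarith) norm_q X hX
    rw [add_sub_cancel_left, norm_smul_e] at this
    exact (abs_le.1 this).1
  have ellipticity : a ≤ inner ℝ e (fderiv ℝ mcFlux (p + s • e) e) := by
    simpa only [he, one_pow, mul_one] using le_inner_fderiv_mcFlux_self_of_norm_le norm_q e
  have gain : (L + 1) * s ≤ (L + 1) / a * s * inner ℝ e (fderiv ℝ mcFlux (p + s • e) e) :=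
    calc (L + 1) * s = (L + 1) / a * s * a := by field_simp
      _ ≤ _ := by gcongr
  rw [mcForm_add_smul_rankOne]
  linarith

end MeanCurvatureForm

section ExponentialPerturbation

open InnerProductSpace

variable {E : Type*} [NormedAddCommGroup E] [InnerProductSpace ℝ E]

theorem hasFDerivAt_exp_mul_inner (lam : ℝ) (e x : E) :
    HasFDerivAt (fun z => Real.exp (lam * inner ℝ e z))
      ((lam * Real.exp (lam * inner ℝ e x)) • innerSL ℝ e) x := by
  refine ((innerSL ℝ e).hasFDerivAt.const_mul lam).exp.congr_fderiv ?_
  simp [smul_smul, mul_comm]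

variable [CompleteSpace E]

theorem contDiffOn_gradient {m n : WithTop ℕ∞} {Ω : Set E} (hΩ : IsOpen Ω) {v : E → ℝ}
    (hv : ContDiffOn ℝ n v Ω) (hmn : m + 1 ≤ n) : ContDiffOn ℝ m (gradient v) Ω :=
  (toDual ℝ E).symm.contDiff.comp_contDiffOn (hv.fderiv_of_isOpen hΩ hmn)

theorem gradient_add_exp_mul_inner (lam ε : ℝ) (e : E) {v : E → ℝ} {x : E}
    (hv : DifferentiableAt ℝ v x) :
    gradient (fun z => v z + ε * Real.exp (lam * inner ℝ e z)) x =
      gradient v x + (ε * lam * Real.exp (lam * inner ℝ e x)) • e := by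
  refine HasGradientAt.gradient (hasGradientAt_iff_hasFDerivAt.2 ?_)
  refine (hv.hasGradientAt.hasFDerivAt.add
    ((hasFDerivAt_exp_mul_inner lam e x).const_mul ε)).congr_fderiv ?_
  ext z
  simp [mul_assoc]

theorem hasFDerivAt_gradient_add_exp_mul_inner (lam ε : ℝ) (e : E) {v : E → ℝ} {x : E}
    {X : E →L[ℝ] E} (hv : ∀ᶠ y in 𝓝 x, DifferentiableAt ℝ v y)
    (hX : HasFDerivAt (gradient v) X x) :
    HasFDerivAt (gradient fun z => v z + ε * Real.exp (lam * inner ℝ e z))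
      (X + (lam * (ε * lam * Real.exp (lam * inner ℝ e x))) • rankOne ℝ e e) x := by
  refine ((hX.add (((hasFDerivAt_exp_mul_inner lam e x).const_mul (ε * lam)).smul_const e))
    |>.congr_of_eventuallyEq
      (hv.mono fun y => gradient_add_exp_mul_inner lam ε e)).congr_fderiv ?_
  ext z
  simp [smul_smul, mul_assoc, mul_left_comm]

end ExponentialPerturbation

section MeanCurvatureOperator

open InnerProductSpace

variable {N : ℕ}

theorem mcOp_eq_mcForm {w : EuclideanSpace ℝ (Fin N) → ℝ} {x : EuclideanSpace ℝ (Fin N)}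
    {X : EuclideanSpace ℝ (Fin N) →L[ℝ] EuclideanSpace ℝ (Fin N)}
    (hX : HasFDerivAt (gradient w) X x) : mcOp w x = mcForm (gradient w x) X := by
  have hasFDerivAt_flux : HasFDerivAt (fun y => mcFlux (gradient w y))
      (fderiv ℝ mcFlux (gradient w x) ∘L X) x :=
    (contDiff_mcFlux.differentiable one_ne_zero _).hasFDerivAt.comp x hX
  rw [mcForm, LinearMap.trace_eq_sum_inner _ (EuclideanSpace.basisFun (Fin N) ℝ)]
  refine Finset.sum_congr rfl fun i _ => ?_
  have hasFDerivAt_component :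
      HasFDerivAt (fun y => (√(1 + ‖gradient w y‖ ^ 2))⁻¹ * gradient w y i) _ x :=
    (EuclideanSpace.proj (𝕜 := ℝ) i).hasFDerivAt.comp x hasFDerivAt_flux
  rw [hasFDerivAt_component.fderiv]
  simp [EuclideanSpace.inner_single_left]

theorem mcOp_add_exp_mul_inner (lam ε : ℝ) (e : EuclideanSpace ℝ (Fin N))
    {v : EuclideanSpace ℝ (Fin N) → ℝ} {x : EuclideanSpace ℝ (Fin N)}
    {X : EuclideanSpace ℝ (Fin N) →L[ℝ] EuclideanSpace ℝ (Fin N)}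
    (hv : ∀ᶠ y in 𝓝 x, DifferentiableAt ℝ v y) (hX : HasFDerivAt (gradient v) X x) :
    mcOp (fun z => v z + ε * Real.exp (lam * inner ℝ e z)) x =
      mcForm (gradient v x + (ε * lam * Real.exp (lam * inner ℝ e x)) • e)
        (X + (lam * (ε * lam * Real.exp (lam * inner ℝ e x))) • rankOne ℝ e e) := by
  rw [mcOp_eq_mcForm (hasFDerivAt_gradient_add_exp_mul_inner lam ε e hv hX),
    gradient_add_exp_mul_inner lam ε e hv.self_of_nhds]

theorem exists_eventually_mcOp_lt_mcOp_add_mul [NeZero N] {Ω K : Set (EuclideanSpace ℝ (Fin N))}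
    (hΩ : IsOpen Ω) (hK : IsCompact K) (hKΩ : K ⊆ Ω) {v : EuclideanSpace ℝ (Fin N) → ℝ}
    (hv : ContDiffOn ℝ 2 v Ω) :
    ∃ η : EuclideanSpace ℝ (Fin N) → ℝ, ContDiff ℝ 2 η ∧
      ∀ᶠ ε in 𝓝[>] (0 : ℝ), ∀ x ∈ K, mcOp v x < mcOp (fun z => v z + ε * η z) x := by
  have contDiffOn_grad : ContDiffOn ℝ 1 (gradient v) Ω :=
    contDiffOn_gradient hΩ hv one_add_one_eq_two.le
  obtain ⟨R, gradient_le⟩ := hK.exists_bound_of_continuousOn (contDiffOn_grad.continuousOn.mono hKΩ)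
  obtain ⟨C, hessian_le⟩ := hK.exists_bound_of_continuousOn
    ((contDiffOn_grad.continuousOn_fderiv_of_isOpen hΩ le_rfl).mono hKΩ)
  obtain ⟨lam, lam_pos, mcForm_lt⟩ :=
    exists_mcForm_lt_mcForm_add (E := EuclideanSpace ℝ (Fin N)) R C
  let e : EuclideanSpace ℝ (Fin N) := EuclideanSpace.single 0 1
  let η (z : EuclideanSpace ℝ (Fin N)) : ℝ := Real.exp (lam * inner ℝ e z)
  have contDiff_η : ContDiff ℝ 2 η := (contDiff_const.mul (contDiff_const.inner ℝ contDiff_id)).exp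
  obtain ⟨B, η_le⟩ := hK.exists_bound_of_continuousOn contDiff_η.continuous.continuousOn
  have eventually_lt_one : ∀ᶠ ε in 𝓝 (0 : ℝ), ε * lam * B < 1 :=
    (Continuous.tendsto' (by fun_prop) 0 0 (by simp)).eventually_lt_const one_pos
  refine ⟨η, contDiff_η, ?_⟩
  filter_upwards [nhdsWithin_le_nhds eventually_lt_one, self_mem_nhdsWithin]
    with ε ε_lt (ε_pos : 0 < ε) x hx
  have s_le_one : ε * lam * η x ≤ 1 := by
    refine le_trans ?_ ε_lt.le
    gcongr
    exact (le_abs_self _).trans (η_le x hx)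
  have hasFDerivAt_grad : HasFDerivAt (gradient v) (fderiv ℝ (gradient v) x) x :=
    (contDiffOn_grad.differentiableOn one_ne_zero).hasFDerivAt (hΩ.mem_nhds (hKΩ hx))
  have eventually_differentiableAt : ∀ᶠ y in 𝓝 x, DifferentiableAt ℝ v y :=
    (hv.differentiableOn two_ne_zero).eventually_differentiableAt (hΩ.mem_nhds (hKΩ hx))
  rw [mcOp_eq_mcForm hasFDerivAt_grad,
    mcOp_add_exp_mul_inner lam ε e eventually_differentiableAt hasFDerivAt_grad]
  exact mcForm_lt e (by simp [e]) _ (gradient_le x hx) _ (hessian_le x hx) _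
    ⟨by positivity, s_le_one⟩

end MeanCurvatureOperator

theorem lowerSemicontinuousOn_sub {X G : Type*} [TopologicalSpace X] [AddCommGroup G]
    [LinearOrder G] [IsOrderedAddMonoid G] [TopologicalSpace G] [OrderTopology G]
    [IsTopologicalAddGroup G] {s : Set X} {f g : X → G} (hf : LowerSemicontinuousOn f s)
    (hg : UpperSemicontinuousOn g s) : LowerSemicontinuousOn (fun x => f x - g x) s := by
  have neg_lsc : LowerSemicontinuousOn (fun x => -g x) s :=
    continuous_neg.comp_upperSemicontinuousOn_antitone hg fun _ _ => neg_le_neg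
  simpa only [sub_eq_add_neg] using hf.add neg_lsc

theorem eventually_exists_isMinOn_sub_mul {X : Type*} [TopologicalSpace X] {s : Set X}
    (hs : IsCompact s) {f g : X → ℝ} (hf : LowerSemicontinuousOn f s) (hg : ContinuousOn g s)
    {x₀ : X} (hx₀ : x₀ ∈ s) {c : ℝ} (hc : f x₀ < c) :
    ∀ᶠ ε in 𝓝 (0 : ℝ), ∃ x ∈ s, f x ≤ c ∧ IsMinOn (fun y => f y - ε * g y) s x := by
  obtain ⟨B, g_le⟩ := hs.exists_bound_of_continuousOn hg
  have eventually_lt : ∀ᶠ ε in 𝓝 (0 : ℝ), |ε| * (2 * B) < c - f x₀ :=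
    (Continuous.tendsto' (by fun_prop) 0 0 (by simp)).eventually_lt_const (sub_pos.2 hc)
  filter_upwards [eventually_lt] with ε ε_lt
  have lsc : LowerSemicontinuousOn (fun y => f y - ε * g y) s :=
    lowerSemicontinuousOn_sub hf (continuousOn_const.mul hg).upperSemicontinuousOn
  obtain ⟨x, hx, x_min⟩ := lsc.exists_isMinOn ⟨x₀, hx₀⟩ hs
  refine ⟨x, hx, ?_, x_min⟩
  have le_at_x₀ : f x - ε * g x ≤ f x₀ - ε * g x₀ := x_min hx₀
  have oscillation_le : ε * (g x - g x₀) ≤ |ε| * (2 * B) :=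
    calc ε * (g x - g x₀) ≤ |ε| * ‖g x - g x₀‖ := (le_abs_self _).trans (abs_mul _ _).le
      _ ≤ |ε| * (‖g x‖ + ‖g x₀‖) := by gcongr; exact norm_sub_le _ _
      _ ≤ |ε| * (2 * B) := by gcongr; linarith [g_le x hx, g_le x₀ hx₀]
  linarith

theorem weak_comparison_supersolution_classical_general {N : ℕ} [NeZero N]
    {Ω : Set (EuclideanSpace ℝ (Fin N))} (hΩo : IsOpen Ω) (hΩb : Bornology.IsBounded Ω)
    {H u v : EuclideanSpace ℝ (Fin N) → ℝ}
    (hu_lsc : LowerSemicontinuousOn u (closure Ω)) (hu : IsViscositySupersol Ω H u)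
    (hv_c2 : ContDiffOn ℝ 2 v Ω) (hv_usc : UpperSemicontinuousOn v (closure Ω))
    (hv_sub : ∀ x ∈ Ω, N * H x ≤ mcOp v x)
    (hbdry : ∀ x ∈ frontier Ω, v x ≤ u x) :
    ∀ x ∈ Ω, v x ≤ u x := by
  by_contra! ⟨x₀, hx₀, u_lt_v⟩
  obtain ⟨c, lt_c, c_neg⟩ := exists_between (sub_neg.2 u_lt_v)
  have lsc : LowerSemicontinuousOn (fun y => u y - v y) (closure Ω) :=
    lowerSemicontinuousOn_sub hu_lsc hv_usc
  let K := closure Ω ∩ (fun y => u y - v y) ⁻¹' Iic c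
  have hK : IsCompact K := lsc.isCompact_inter_preimage_Iic hΩb.isCompact_closure c
  have hKΩ : K ⊆ Ω := fun y ⟨hy, (hyc : u y - v y ≤ c)⟩ => by
    by_contra hyΩ
    linarith [hbdry y (hΩo.frontier_eq ▸ ⟨hy, hyΩ⟩)]
  obtain ⟨η, hη, strict_subsolution⟩ := exists_eventually_mcOp_lt_mcOp_add_mul hΩo hK hKΩ hv_c2
  have exists_min := eventually_exists_isMinOn_sub_mul hΩb.isCompact_closure lsc
    hη.continuous.continuousOn (subset_closure hx₀) lt_c
  obtain ⟨ε, mcOp_lt, x, hx, hxc, x_min⟩ :=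
    (strict_subsolution.and (nhdsWithin_le_nhds exists_min)).exists
  have hxΩ : x ∈ Ω := hKΩ ⟨hx, hxc⟩
  have local_min : IsLocalMinOn (fun y => u y - (v y + ε * η y)) Ω x := by
    simpa only [sub_sub] using (x_min.on_subset subset_closure).localize
  have mcOp_le := hu _ (hv_c2.add (contDiff_const.mul hη).contDiffOn) x hxΩ local_min
  linarith [mcOp_lt x ⟨hx, hxc⟩, hv_sub x hxΩ]

/-- **Weak comparison with a classical solution (supersolution version)**:
a lower semicontinuous viscosity supersolution of `M(u) = N H` on a bounded
domain dominates any classical solution that it dominates on the boundary. -/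
theorem weak_comparison_supersolution_classical {N : ℕ} (hN : 2 ≤ N)
    (Ω : Set (EuclideanSpace ℝ (Fin N))) (hΩo : IsOpen Ω) (hΩc : IsConnected Ω)
    (hΩb : Bornology.IsBounded Ω)
    (H : EuclideanSpace ℝ (Fin N) → ℝ) (hH : LocLipschitzOn Ω H)
    (u v : EuclideanSpace ℝ (Fin N) → ℝ)
    (hu_lsc : LowerSemicontinuousOn u (closure Ω)) (hu : IsViscositySupersol Ω H u)
    (hv_c2 : ContDiffOn ℝ 2 v Ω) (hv_cont : ContinuousOn v (closure Ω))
    (hv_sol : ∀ x ∈ Ω, mcOp v x = N * H x)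
    (hbdry : ∀ x ∈ frontier Ω, v x ≤ u x) :
    ∀ x ∈ Ω, v x ≤ u x := by
  have : NeZero N := ⟨by lia⟩
  exact weak_comparison_supersolution_classical_general hΩo hΩb hu_lsc hu hv_c2
    hv_cont.upperSemicontinuousOn (fun x hx => (hv_sol x hx).ge) hbdry
end

section
/- Weak comparison with a classical solution (subsolution version): Let Ω be a bounded domain in ℝ^N with N ≥ 2 and let H : Ω → ℝ be locally Lipschitz continuous. Let u ∈ C²(Ω) ∩ C(cl(Ω)) satisfy M(u) = NH pointwise in Ω, and let v : cl(Ω) → ℝ be upper semicontinuous on cl(Ω) and a viscosity subsolution of M(v) = NH in Ω. If u ≥ v on ∂Ω, then u ≥ v in Ω. -/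
open Metric Set Filter Topology MeasureTheory

/-!
At an interior maximum `y` of `v - φ`, where `φ = u - ε exp ⟪a, ·⟫`, the subsolution property would
give `M(u) ≤ M(φ)` at `y`. In terms of `t = ε exp ⟪a, y⟫`, passing from `u` to `φ` changes the
gradient by `-t a` and the Hessian by `-t a ⊗ a`. On a compact set the first change moves `M` by at
most `C t ‖a‖`, while by ellipticity the second one lowers it by at least `θ t ‖a‖²`, so for large
`‖a‖` one has `M(φ) < M(u)`: a contradiction. If `v > u` somewhere, then for small `ε` such a
maximum exists and lies in a compact subset of `Ω` that does not depend on `a` and `ε`.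
-/

open InnerProductSpace
open scoped RealInnerProductSpace

section Semicontinuity

variable {X : Type*} [TopologicalSpace X]

lemma upperSemicontinuousOn_sub {s : Set X} {f g : X → ℝ} (hf : UpperSemicontinuousOn f s)
    (hg : LowerSemicontinuousOn g s) : UpperSemicontinuousOn (fun x => f x - g x) s := by
  simpa only [sub_eq_add_neg, Function.comp_apply] using
    hf.add (continuous_neg.comp_lowerSemicontinuousOn_antitone hg fun _ _ => neg_le_neg)

lemma inter_preimage_Ici_subset_of_frontier_le {α : Type*} [Preorder α] {Ω : Set X}
    (hΩ : IsOpen Ω) {f : X → α} {b c : α} (hf : ∀ x ∈ frontier Ω, f x ≤ b) (hbc : b < c) :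
    closure Ω ∩ f ⁻¹' Ici c ⊆ Ω := by
  rintro x ⟨hx, hcx : c ≤ f x⟩
  by_contra hxΩ
  have hx_frontier : x ∈ frontier Ω := hΩ.frontier_eq ▸ ⟨hx, hxΩ⟩
  exact (hf x hx_frontier).not_gt (hbc.trans_le hcx)

lemma exists_isMaxOn_add_mem_preimage_Ici {K : Set X} (hK : IsCompact K) {f g : X → ℝ}
    (hf : UpperSemicontinuousOn f K) (hg : UpperSemicontinuousOn g K) {x₀ : X} (hx₀ : x₀ ∈ K)
    {c : ℝ} (hg₀ : 0 ≤ g x₀) (hgc : ∀ x ∈ K, g x ≤ f x₀ - c) :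
    ∃ y ∈ K ∩ f ⁻¹' Ici c, IsMaxOn (fun x => f x + g x) K y := by
  obtain ⟨y, hy, hmax⟩ := (hf.add hg).exists_isMaxOn ⟨x₀, hx₀⟩ hK
  have hle : f x₀ + g x₀ ≤ f y + g y := hmax hx₀
  refine ⟨y, ⟨hy, ?_⟩, hmax⟩
  change c ≤ f y
  linarith [hgc y hy]

end Semicontinuity

section DivergenceForm

variable {E : Type*} [NormedAddCommGroup E] [InnerProductSpace ℝ E]

/-- The value of the divergence-form operator `div (F (Dw))` at a point where `Dw = p` and
`D²w = X`. The Hessian is encoded as the derivative `X` of the gradient field. -/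
noncomputable def jetDivergence (F : E → E) (p : E) (X : E →L[ℝ] E) : ℝ :=
  LinearMap.trace ℝ E (fderiv ℝ F p ∘L X)

variable {F : E → E}

lemma exists_pos_le_inner_fderiv (hF : ContDiff ℝ 1 F) {e : E}
    (he : ∀ p, 0 < ⟪e, fderiv ℝ F p e⟫) {S : Set E} (hS : IsCompact S) :
    ∃ θ, 0 < θ ∧ ∀ p ∈ S, θ ≤ ⟪e, fderiv ℝ F p e⟫ := by
  have hF' : Continuous (fderiv ℝ F) := hF.continuous_fderiv one_ne_zero
  have hcont : Continuous fun p => ⟪e, fderiv ℝ F p e⟫ :=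
    continuous_const.inner (hF'.clm_apply continuous_const)
  exact hS.exists_forall_le' hcont.continuousOn fun p _ => he p

variable [FiniteDimensional ℝ E]

lemma jetDivergence_sub_smul_rankOne (p : E) (X : E →L[ℝ] E) (t : ℝ) (a : E) :
    jetDivergence F p (X - t • rankOne ℝ a a) =
      jetDivergence F p X - t * ⟪a, fderiv ℝ F p a⟫ := by
  simp [jetDivergence, ContinuousLinearMap.comp_sub, comp_rankOne, trace_rankOne]

lemma exists_abs_jetDivergence_sub_le (hF : ContDiff ℝ 2 F) {S : Set E} (hS : IsCompact S) :
    ∃ C, 0 ≤ C ∧ ∀ p ∈ S, ∀ q ∈ S, ∀ X,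
      |jetDivergence F q X - jetDivergence F p X| ≤ C * ‖q - p‖ * ‖X‖ := by
  let tr : (E →L[ℝ] E) →L[ℝ] ℝ :=
    LinearMap.toContinuousLinearMap (LinearMap.trace ℝ E ∘ₗ ContinuousLinearMap.coeLM ℝ)
  have hF' : ContDiff ℝ 1 (fderiv ℝ F) := hF.fderiv_right (by norm_num)
  obtain ⟨L, hL⟩ := hF'.locallyLipschitz.locallyLipschitzOn.exists_lipschitzOnWith_of_compact hS
  refine ⟨‖tr‖ * L, by positivity, fun p hp q hq X => ?_⟩
  have hdiff : jetDivergence F q X - jetDivergence F p X =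
      tr ((fderiv ℝ F q - fderiv ℝ F p) ∘L X) := by
    rw [ContinuousLinearMap.sub_comp, map_sub]; rfl
  calc |jetDivergence F q X - jetDivergence F p X|
      ≤ ‖tr‖ * ‖(fderiv ℝ F q - fderiv ℝ F p) ∘L X‖ := hdiff ▸ tr.le_opNorm _
    _ ≤ ‖tr‖ * (‖fderiv ℝ F q - fderiv ℝ F p‖ * ‖X‖) := by
        gcongr; exact ContinuousLinearMap.opNorm_comp_le _ _
    _ ≤ ‖tr‖ * (L * ‖q - p‖ * ‖X‖) := by
        gcongr; exact hL.norm_sub_le hq hp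
    _ = ‖tr‖ * L * ‖q - p‖ * ‖X‖ := by ring

lemma exists_jetDivergence_sub_le_add_mul (hF : ContDiff ℝ 2 F) {e : E}
    (he : ∀ p, 0 < ⟪e, fderiv ℝ F p e⟫) (R : ℝ) :
    ∃ C θ : ℝ, 0 < θ ∧ ∀ s l : ℝ, 0 ≤ s → 0 ≤ l → s * ‖e‖ ≤ 1 →
      ∀ (p : E) (X : E →L[ℝ] E), ‖p‖ ≤ R → ‖X‖ ≤ R →
        jetDivergence F (p - s • e) (X - (s * l) • rankOne ℝ e e) ≤
          jetDivergence F p X + s * (C - l * θ) := by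
  have hS : IsCompact (closedBall (0 : E) (R + 1)) := isCompact_closedBall _ _
  obtain ⟨C, hC, hlip⟩ := exists_abs_jetDivergence_sub_le hF hS
  obtain ⟨θ, hθ, hell⟩ := exists_pos_le_inner_fderiv (hF.of_le one_le_two) he hS
  refine ⟨C * ‖e‖ * R, θ, hθ, fun s l hs hl hse p X hp hX => ?_⟩
  have hnorm : ‖s • e‖ = s * ‖e‖ := norm_smul_of_nonneg hs e
  have hpS : p ∈ closedBall (0 : E) (R + 1) := by
    rw [mem_closedBall_zero_iff]; linarith
  have hqS : p - s • e ∈ closedBall (0 : E) (R + 1) := by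
    rw [mem_closedBall_zero_iff]
    exact (norm_sub_le _ _).trans (add_le_add hp (hnorm.trans_le hse))
  have hgradient : jetDivergence F (p - s • e) X - jetDivergence F p X ≤ s * (C * ‖e‖ * R) :=
    calc jetDivergence F (p - s • e) X - jetDivergence F p X
        ≤ C * ‖p - s • e - p‖ * ‖X‖ := (le_abs_self _).trans (hlip p hpS _ hqS X)
      _ = C * (s * ‖e‖) * ‖X‖ := by rw [sub_sub_cancel_left, norm_neg, hnorm]
      _ ≤ C * (s * ‖e‖) * R := by gcongr
      _ = s * (C * ‖e‖ * R) := by ring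
  have hhessian : s * l * θ ≤ s * l * ⟪e, fderiv ℝ F (p - s • e) e⟫ := by
    gcongr; exact hell _ hqS
  rw [jetDivergence_sub_smul_rankOne]
  linarith

lemma exists_jetDivergence_sub_lt (hF : ContDiff ℝ 2 F) {e : E}
    (he : ∀ p, 0 < ⟪e, fderiv ℝ F p e⟫) (R : ℝ) :
    ∃ (a : E) (δ : ℝ), 0 < δ ∧ ∀ t, 0 < t → t ≤ δ → ∀ p X, ‖p‖ ≤ R → ‖X‖ ≤ R →
      jetDivergence F (p - t • a) (X - t • rankOne ℝ a a) < jetDivergence F p X := by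
  obtain ⟨C, θ, hθ, hbound⟩ := exists_jetDivergence_sub_le_add_mul hF he R
  obtain ⟨l, hl, hCl⟩ : ∃ l : ℝ, 0 < l ∧ C < l * θ :=
    ((eventually_gt_atTop 0).and
      ((tendsto_id.atTop_mul_const hθ).eventually_gt_atTop C)).exists
  refine ⟨l • e, (l * ‖e‖ + 1)⁻¹, by positivity, fun t ht htδ p X hp hX => ?_⟩
  have hstep : t * l * ‖e‖ ≤ 1 := by
    have : t * (l * ‖e‖ + 1) ≤ 1 := (le_inv_mul_iff₀' (by positivity)).1 (by simpa using htδ)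
    linarith
  have hrankOne : t • rankOne ℝ (l • e) (l • e) = (t * l * l) • rankOne ℝ e e := by
    simp [smul_smul, mul_assoc]
  rw [smul_smul, hrankOne]
  exact (hbound (t * l) l (by positivity) hl.le hstep p X hp hX).trans_lt
    (add_lt_of_neg_right _ (mul_neg_of_pos_of_neg (by positivity) (sub_neg.2 hCl)))

end DivergenceForm

section MeanCurvatureField

variable {E : Type*} [NormedAddCommGroup E] [InnerProductSpace ℝ E]

/-- The field `p ↦ p / √(1 + |p|²)`, for which the mean curvature operator is
`M(w) = div (meanCurvatureField (Dw))`. -/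
noncomputable def meanCurvatureField (p : E) : E := (√(1 + ‖p‖ ^ 2))⁻¹ • p

lemma contDiff_meanCurvatureField {n : WithTop ℕ∞} :
    ContDiff ℝ n (meanCurvatureField : E → E) := by
  have hpos (p : E) : 0 < 1 + ‖p‖ ^ 2 := by positivity
  have hsqrt : ContDiff ℝ n fun p : E => √(1 + ‖p‖ ^ 2) :=
    (contDiff_const.add (contDiff_norm_sq ℝ)).sqrt fun p => (hpos p).ne'
  exact (hsqrt.inv fun p => (Real.sqrt_pos.2 (hpos p)).ne').smul contDiff_id

lemma inner_fderiv_meanCurvatureField (p e : E) :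
    ⟪e, fderiv ℝ meanCurvatureField p e⟫ =
      (√(1 + ‖p‖ ^ 2) ^ 3)⁻¹ * ((1 + ‖p‖ ^ 2) * ‖e‖ ^ 2 - ⟪p, e⟫ ^ 2) := by
  have hs : 0 < √(1 + ‖p‖ ^ 2) := by positivity
  have hsqrt : HasFDerivAt (fun q : E => √(1 + ‖q‖ ^ 2)) _ p :=
    ((hasStrictFDerivAt_norm_sq p).hasFDerivAt.const_add 1).sqrt (by positivity)
  have hfield : HasFDerivAt (meanCurvatureField : E → E) _ p :=
    ((hasDerivAt_inv hs.ne').comp_hasFDerivAt p hsqrt).smul (hasFDerivAt_id p)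
  rw [hfield.fderiv, ← Real.sq_sqrt (by positivity : 0 ≤ 1 + ‖p‖ ^ 2)]
  simp only [Function.comp_apply, Real.sqrt_nonneg, Real.sqrt_sq, one_div, mul_inv_rev, neg_smul,
    add_apply, smul_apply, ContinuousLinearMap.id_apply, ContinuousLinearMap.smulRight_apply,
    neg_apply, coe_innerSL_apply, nsmul_eq_mul, Nat.cast_ofNat, smul_eq_mul, inner_add_right,
    real_inner_smul_right, inner_self_eq_norm_sq_to_K, Real.ringHom_apply, inner_neg_right,
    real_inner_comm]
  field_simp
  ring

lemma inner_fderiv_meanCurvatureField_pos (p : E) {e : E} (he : e ≠ 0) :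
    0 < ⟪e, fderiv ℝ meanCurvatureField p e⟫ := by
  have hcauchy : ⟪p, e⟫ ^ 2 ≤ ‖p‖ ^ 2 * ‖e‖ ^ 2 := by
    rw [← mul_pow]
    exact sq_le_sq.2 <| by simpa using abs_real_inner_le_norm p e
  have he' : 0 < ‖e‖ ^ 2 := by positivity
  rw [inner_fderiv_meanCurvatureField]
  exact mul_pos (by positivity) (by linarith)

end MeanCurvatureField

section Gradient

variable {E : Type*} [NormedAddCommGroup E] [InnerProductSpace ℝ E] [CompleteSpace E]
  {u : E → ℝ} {x : E}

lemma contDiffAt_gradient {m n : WithTop ℕ∞} (hu : ContDiffAt ℝ n u x) (hmn : m + 1 ≤ n) :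
    ContDiffAt ℝ m (gradient u) x :=
  (toDual ℝ E).symm.toContinuousLinearEquiv.contDiff.contDiffAt.comp x (hu.fderiv_right hmn)

lemma gradient_sub_mul_exp_inner (hu : DifferentiableAt ℝ u x) (ε : ℝ) (a : E) :
    gradient (fun y => u y - ε * Real.exp ⟪a, y⟫) x =
      gradient u x - (ε * Real.exp ⟪a, x⟫) • a := by
  have hexp : HasFDerivAt (fun y => Real.exp ⟪a, y⟫) _ x := (innerSL ℝ a).hasFDerivAt.exp
  refine (hasGradientAt_iff_hasFDerivAt.2 <|
    (hu.hasFDerivAt.sub (hexp.const_mul ε)).congr_fderiv ?_).gradient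
  ext z
  simp only [coe_innerSL_apply, sub_apply, smul_apply, smul_eq_mul, map_sub, toDual_gradient,
    map_smul, toDual_apply_apply, sub_right_inj]
  ring

lemma hasFDerivAt_gradient_sub_mul_exp_inner (hu : ContDiffAt ℝ 2 u x) (ε : ℝ) (a : E) :
    HasFDerivAt (gradient fun y => u y - ε * Real.exp ⟪a, y⟫)
      (fderiv ℝ (gradient u) x - (ε * Real.exp ⟪a, x⟫) • rankOne ℝ a a) x := by
  have hexp : HasFDerivAt (fun y => Real.exp ⟪a, y⟫) _ x := (innerSL ℝ a).hasFDerivAt.exp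
  have hgrad : DifferentiableAt ℝ (gradient u) x :=
    (contDiffAt_gradient (m := 1) hu (by norm_num)).differentiableAt one_ne_zero
  have hformula : gradient (fun y => u y - ε * Real.exp ⟪a, y⟫) =ᶠ[𝓝 x]
      fun y => gradient u y - (ε * Real.exp ⟪a, y⟫) • a := by
    filter_upwards [hu.eventually (by simp)] with y hy
    exact gradient_sub_mul_exp_inner (hy.differentiableAt two_ne_zero) ε a
  refine ((hgrad.hasFDerivAt.sub ((hexp.const_mul ε).smul_const a)).congr_of_eventuallyEq
    hformula).congr_fderiv ?_
  ext z
  simp [smul_smul, mul_assoc]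

end Gradient

section MeanCurvatureOperator

variable {N : ℕ} {u w : EuclideanSpace ℝ (Fin N) → ℝ} {x : EuclideanSpace ℝ (Fin N)}

lemma mcOp_eq_jetDivergence (hw : DifferentiableAt ℝ (gradient w) x) :
    mcOp w x = jetDivergence meanCurvatureField (gradient w x) (fderiv ℝ (gradient w) x) := by
  have hfield : HasFDerivAt (fun y => meanCurvatureField (gradient w y)) _ x :=
    ((contDiff_meanCurvatureField (n := 1)).differentiable one_ne_zero
      (gradient w x)).hasFDerivAt.comp x hw.hasFDerivAt
  rw [mcOp, jetDivergence, LinearMap.trace_eq_sum_inner _ (EuclideanSpace.basisFun (Fin N) ℝ)]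
  refine Finset.sum_congr rfl fun i _ => ?_
  have hcoord : HasFDerivAt
      (fun y => (√(1 + ‖gradient w y‖ ^ 2))⁻¹ * gradient w y i) _ x :=
    (EuclideanSpace.proj i : EuclideanSpace ℝ (Fin N) →L[ℝ] ℝ).hasFDerivAt.comp x hfield
  simp [hcoord.fderiv, EuclideanSpace.inner_single_left]

lemma mcOp_sub_mul_exp_inner (hu : ContDiffAt ℝ 2 u x) (ε : ℝ) (a : EuclideanSpace ℝ (Fin N)) :
    mcOp (fun y => u y - ε * Real.exp ⟪a, y⟫) x =
      jetDivergence meanCurvatureField (gradient u x - (ε * Real.exp ⟪a, x⟫) • a)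
        (fderiv ℝ (gradient u) x - (ε * Real.exp ⟪a, x⟫) • rankOne ℝ a a) := by
  have hgrad := hasFDerivAt_gradient_sub_mul_exp_inner hu ε a
  rw [mcOp_eq_jetDivergence hgrad.differentiableAt, hgrad.fderiv,
    gradient_sub_mul_exp_inner (hu.differentiableAt two_ne_zero)]

lemma exists_mcOp_sub_mul_exp_inner_lt [NeZero N] {K : Set (EuclideanSpace ℝ (Fin N))}
    (hK : IsCompact K) (hu : ∀ x ∈ K, ContDiffAt ℝ 2 u x) :
    ∃ (a : EuclideanSpace ℝ (Fin N)) (δ : ℝ), 0 < δ ∧ ∀ x ∈ K, ∀ ε > 0, ε * Real.exp ⟪a, x⟫ ≤ δ →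
      mcOp (fun y => u y - ε * Real.exp ⟪a, y⟫) x < mcOp u x := by
  have hgrad (x) (hx : x ∈ K) : ContDiffAt ℝ 1 (gradient u) x :=
    contDiffAt_gradient (hu x hx) (by norm_num)
  obtain ⟨P, hP⟩ := hK.exists_bound_of_continuousOn
    fun x hx => (hgrad x hx).continuousAt.continuousWithinAt
  obtain ⟨Q, hQ⟩ := hK.exists_bound_of_continuousOn
    fun x hx => ((hgrad x hx).fderiv_right (m := 0) le_rfl).continuousAt.continuousWithinAt
  obtain ⟨e, he⟩ := exists_ne (0 : EuclideanSpace ℝ (Fin N))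
  obtain ⟨a, δ, hδ, hlt⟩ := exists_jetDivergence_sub_lt contDiff_meanCurvatureField
    (fun p => inner_fderiv_meanCurvatureField_pos p he) (max P Q)
  refine ⟨a, δ, hδ, fun x hx ε hε hεδ => ?_⟩
  rw [mcOp_sub_mul_exp_inner (hu x hx),
    mcOp_eq_jetDivergence ((hgrad x hx).differentiableAt one_ne_zero)]
  exact hlt _ (by positivity) hεδ _ _ ((hP x hx).trans (le_max_left _ _))
    ((hQ x hx).trans (le_max_right _ _))

end MeanCurvatureOperator

lemma exists_pos_forall_mul_exp_inner_le {E : Type*} [NormedAddCommGroup E]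
    [InnerProductSpace ℝ E] {K : Set E} (hK : Bornology.IsBounded K) (a : E) {η : ℝ}
    (hη : 0 < η) : ∃ ε > 0, ∀ x ∈ K, ε * Real.exp ⟪a, x⟫ ≤ η := by
  obtain ⟨R, hR⟩ := hK.exists_norm_le
  refine ⟨η * Real.exp (-(‖a‖ * R)), by positivity, fun x hx => ?_⟩
  have hinner : ⟪a, x⟫ ≤ ‖a‖ * R :=
    (real_inner_le_norm a x).trans (by gcongr; exact hR x hx)
  rw [mul_assoc, ← Real.exp_add]
  exact mul_le_of_le_one_right hη.le (Real.exp_le_one_iff.2 (by linarith))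

theorem weak_comparison_subsolution_classical_general {N : ℕ} [NeZero N]
    {Ω : Set (EuclideanSpace ℝ (Fin N))} (hΩo : IsOpen Ω) (hΩb : Bornology.IsBounded Ω)
    {H u v : EuclideanSpace ℝ (Fin N) → ℝ}
    (hu_c2 : ContDiffOn ℝ 2 u Ω) (hu_lsc : LowerSemicontinuousOn u (closure Ω))
    (hu_super : ∀ x ∈ Ω, mcOp u x ≤ N * H x)
    (hv_usc : UpperSemicontinuousOn v (closure Ω)) (hv : IsViscositySubsol Ω H v)
    (hbdry : ∀ x ∈ frontier Ω, v x ≤ u x) :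
    ∀ x ∈ Ω, v x ≤ u x := by
  intro x₀ hx₀
  by_contra! hlt
  obtain ⟨c, hc, hcx₀⟩ : ∃ c, 0 < c ∧ c < v x₀ - u x₀ := exists_between (sub_pos.2 hlt)
  have hcpt : IsCompact (closure Ω) := hΩb.isCompact_closure
  have husc : UpperSemicontinuousOn (fun x => v x - u x) (closure Ω) :=
    upperSemicontinuousOn_sub hv_usc hu_lsc
  have hKΩ := inter_preimage_Ici_subset_of_frontier_le hΩo
    (fun x hx => sub_nonpos.2 (hbdry x hx)) hc
  obtain ⟨a, δ, hδ, hstrict⟩ := exists_mcOp_sub_mul_exp_inner_lt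
    (husc.isCompact_inter_preimage_Ici hcpt c)
    fun x hx => hu_c2.contDiffAt (hΩo.mem_nhds (hKΩ hx))
  obtain ⟨ε, hε, hsmall⟩ := exists_pos_forall_mul_exp_inner_le hΩb.closure a
    (lt_min hδ (sub_pos.2 hcx₀))
  have hexp : ContDiff ℝ 2 fun x => ε * Real.exp ⟪a, x⟫ :=
    contDiff_const.mul (innerSL ℝ a).contDiff.exp
  obtain ⟨y, hyK, hmax⟩ := exists_isMaxOn_add_mem_preimage_Ici hcpt husc
    hexp.continuous.continuousOn.upperSemicontinuousOn (subset_closure hx₀)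
    (by positivity) fun x hx => (hsmall x hx).trans (min_le_right _ _)
  have hmaxΩ : IsMaxOn (fun x => v x - (u x - ε * Real.exp ⟪a, x⟫)) Ω y := by
    simpa only [sub_add] using hmax.on_subset subset_closure
  have hge := hv _ (hu_c2.sub hexp.contDiffOn) y (hKΩ hyK) hmaxΩ.localize
  have hlt_y := hstrict y hyK ε hε ((hsmall y hyK.1).trans (min_le_left _ _))
  exact (hlt_y.trans_le (hu_super y (hKΩ hyK))).not_ge hge

/-- **Weak comparison with a classical solution (subsolution version)**:
an upper semicontinuous viscosity subsolution of `M(v) = N H` on a bounded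
domain is dominated by any classical solution dominating it on the boundary. -/
theorem weak_comparison_subsolution_classical {N : ℕ} (hN : 2 ≤ N)
    (Ω : Set (EuclideanSpace ℝ (Fin N))) (hΩo : IsOpen Ω) (hΩc : IsConnected Ω)
    (hΩb : Bornology.IsBounded Ω)
    (H : EuclideanSpace ℝ (Fin N) → ℝ) (hH : LocLipschitzOn Ω H)
    (u v : EuclideanSpace ℝ (Fin N) → ℝ)
    (hu_c2 : ContDiffOn ℝ 2 u Ω) (hu_cont : ContinuousOn u (closure Ω))
    (hu_sol : ∀ x ∈ Ω, mcOp u x = N * H x)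
    (hv_usc : UpperSemicontinuousOn v (closure Ω)) (hv : IsViscositySubsol Ω H v)
    (hbdry : ∀ x ∈ frontier Ω, v x ≤ u x) :
    ∀ x ∈ Ω, v x ≤ u x := by
  have : NeZero N := ⟨by omega⟩
  exact weak_comparison_subsolution_classical_general hΩo hΩb hu_c2
    hu_cont.lowerSemicontinuousOn (fun x hx => (hu_sol x hx).le) hv_usc hv hbdry
end
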